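/- Let x > 0 and let S⁺(x,v) be the LDC switch network for x with connector v in which v is an unbounded generator. Then the set of values { g(v) : (Lₛ, θ, g, d) is a feasible switching solution of S⁺(x,v) } equals {0, x}. -/

import Mathlib

open scoped BigOperators ENNReal Classical

/-- A Linear DC (LDC) power network on the finite bus type `V`.
`adj a b` states that there is a line between buses `a` and `b` (it is meant to be
symmetric); `cap`/`sus` give the capacity and susceptance of that line; `pmin`/`pmax`
are the minimum/maximum demand, `gmax` is the maximum generation (`⊤` meaning
unbounded) and `cost` is the generation cost. -/
structure LDCNetwork (V : Type*) [Fintype V] where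
  adj : V → V → Prop
  cap : V → V → ℝ
  sus : V → V → ℝ
  pmin : V → ℝ
  pmax : V → ℝ≥0∞
  gmax : V → ℝ≥0∞
  cost : V → ℝ

/-- A candidate switching solution: the set of switched-off lines (as a relation on
buses), the phase angles `theta`, the generation `gen` and the served demand `dem`. -/
structure LDCSolution (V : Type*) [Fintype V] where
  switched : V → V → Prop
  theta : V → ℝ
  gen : V → ℝ
  dem : V → ℝ

/-- Feasibility of a switching solution `S` for the network `N`: switched-off lines are
lines of the network and switching is symmetric; the flow `sus·(θ a - θ b)` of every
non-switched line is within its capacity; the demand and generation bounds hold; and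
Kirchhoff's conservation law holds at every bus. -/
def LDCSolution.IsFeasible {V : Type*} [Fintype V] (S : LDCSolution V)
    (N : LDCNetwork V) : Prop :=
  (∀ a b, S.switched a b → N.adj a b) ∧
  (∀ a b, S.switched a b → S.switched b a) ∧
  (∀ a b, N.adj a b → ¬ S.switched a b →
      |N.sus a b * (S.theta a - S.theta b)| ≤ N.cap a b) ∧
  (∀ v, N.pmin v ≤ S.dem v ∧ 0 ≤ S.dem v ∧ ENNReal.ofReal (S.dem v) ≤ N.pmax v) ∧
  (∀ v, 0 ≤ S.gen v ∧ ENNReal.ofReal (S.gen v) ≤ N.gmax v) ∧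
  (∀ v, (∑ b : V, if N.adj v b ∧ ¬ S.switched v b
          then N.sus v b * (S.theta v - S.theta b) else 0) = S.gen v - S.dem v)

/-- Build an LDC network from a one-directional line specification:
`spec p q = some (c, s)` means that there is a line between buses `p` and `q`
with capacity `c` and susceptance `s`. -/
noncomputable def mkNet {V : Type*} [Fintype V] (spec : V → V → Option (ℝ × ℝ))
    (pmin : V → ℝ) (pmax gmax : V → ℝ≥0∞) (cost : V → ℝ) : LDCNetwork V where
  adj a b := (spec a b).isSome ∨ (spec b a).isSome
  cap a b := ((spec a b).map Prod.fst).getD (((spec b a).map Prod.fst).getD 0)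
  sus a b := ((spec a b).map Prod.snd).getD (((spec b a).map Prod.snd).getD 0)
  pmin := pmin
  pmax := pmax
  gmax := gmax
  cost := cost

/-- Lines of the switch network `S(x,v)`.  Bus `0` is the generator `g`, bus `1` is
the load `l` and bus `2` is the connector `v`: lines `({g,l},2x,1)`, `({g,v},x,1)`
and `({v,l},x,1)`. -/
noncomputable def switchSpec (x : ℝ) : Fin 3 → Fin 3 → Option (ℝ × ℝ) := fun p q =>
  if p = 0 ∧ q = 1 then some (2 * x, 1)
  else if p = 0 ∧ q = 2 then some (x, 1)
  else if p = 2 ∧ q = 1 then some (x, 1)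
  else none

/-- The switch network `S⁺(x,v)` in which the connector `v` (bus `2`) is an unbounded
generator: `p⁻(l) = p⁺(l) = 3x`, `g⁺(g) = 3x`, `g⁺(v) = ⊤`. -/
noncomputable def Splus (x : ℝ) : LDCNetwork (Fin 3) :=
  mkNet (switchSpec x)
    (fun b => if b = 1 then 3 * x else 0)
    (fun b => if b = 1 then ENNReal.ofReal (3 * x) else 0)
    (fun b => if b = 0 then ENNReal.ofReal (3 * x) else if b = 2 then ⊤ else 0)
    (fun _ => 0)

/-!
The lines at the load `l` have total capacity `3x`, which is exactly its demand, so in a feasible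
solution both of them are saturated; in particular neither is switched off, and the phase angles
satisfy `θ(g) - θ(l) = 2x` and `θ(v) - θ(l) = x`. Hence `θ(g) - θ(v) = x`, and the line `{g,v}`
carries the flow `x` if it is active and `0` if it is switched off. As `v` sends `x` to `l`,
it generates `0` in the first case and `x` in the second.
-/

namespace LDCSolution

variable {V : Type*} [Fintype V] {S : LDCSolution V} {N : LDCNetwork V} {a b v : V}

/-- The flow from bus `a` to bus `b` in the network `N` under the switching solution `S`. It is `0`
if there is no line between `a` and `b` or if that line is switched off, so that Kirchhoff's law
becomes a sum over all buses. -/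
noncomputable def flow (S : LDCSolution V) (N : LDCNetwork V) (a b : V) : ℝ :=
  if N.adj a b ∧ ¬ S.switched a b then N.sus a b * (S.theta a - S.theta b) else 0

theorem flow_self : S.flow N a a = 0 := by
  simp [flow]

theorem flow_eq_sus_mul_of_ne_zero (h : S.flow N a b ≠ 0) :
    S.flow N a b = N.sus a b * (S.theta a - S.theta b) :=
  (ite_eq_or_eq _ _ _).resolve_right h

namespace IsFeasible

theorem sum_flow (hS : S.IsFeasible N) (v : V) : ∑ b, S.flow N v b = S.gen v - S.dem v :=
  hS.2.2.2.2.2 v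

theorem pmin_le_dem (hS : S.IsFeasible N) (v : V) : N.pmin v ≤ S.dem v :=
  (hS.2.2.2.1 v).1

theorem dem_eq_zero (hS : S.IsFeasible N) (hv : N.pmax v = 0) : S.dem v = 0 := by
  obtain ⟨-, dem_nonneg, dem_le⟩ := hS.2.2.2.1 v
  rw [hv, nonpos_iff_eq_zero, ENNReal.ofReal_eq_zero] at dem_le
  exact le_antisymm dem_le dem_nonneg

theorem gen_eq_zero (hS : S.IsFeasible N) (hv : N.gmax v = 0) : S.gen v = 0 := by
  obtain ⟨gen_nonneg, gen_le⟩ := hS.2.2.2.2.1 v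
  rw [hv, nonpos_iff_eq_zero, ENNReal.ofReal_eq_zero] at gen_le
  exact le_antisymm gen_le gen_nonneg

theorem flow_swap (hS : S.IsFeasible N) (hadj : N.adj a b ↔ N.adj b a)
    (hsus : N.sus a b = N.sus b a) : S.flow N b a = -S.flow N a b := by
  have switched_comm : S.switched a b ↔ S.switched b a := ⟨hS.2.1 a b, hS.2.1 b a⟩
  simp only [flow, hadj, hsus, switched_comm]
  split_ifs <;> ring

theorem abs_flow_le_cap (hS : S.IsFeasible N) (hcap : 0 ≤ N.cap a b) :
    |S.flow N a b| ≤ N.cap a b := by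
  unfold flow
  split_ifs with hactive
  · exact hS.2.2.1 a b hactive.1 hactive.2
  · rwa [abs_zero]

theorem flow_eq_neg_cap_of_sum_cap_le (hS : S.IsFeasible N) (hcap : ∀ b, 0 ≤ N.cap v b)
    (hdem : ∑ b, N.cap v b ≤ S.dem v - S.gen v) (b : V) : S.flow N v b = -N.cap v b := by
  have neg_cap_le_flow : ∀ b ∈ Finset.univ, -N.cap v b ≤ S.flow N v b :=
    fun b _ ↦ (abs_le.mp (hS.abs_flow_le_cap (hcap b))).1
  have sum_eq : ∑ b, -N.cap v b = ∑ b, S.flow N v b := by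
    refine le_antisymm (Finset.sum_le_sum neg_cap_le_flow) ?_
    rw [hS.sum_flow, Finset.sum_neg_distrib]
    linarith
  exact ((Finset.sum_eq_sum_iff_of_le neg_cap_le_flow).mp sum_eq b (Finset.mem_univ b)).symm

end IsFeasible

end LDCSolution

section SwitchNetwork

open LDCSolution

variable {x y : ℝ} {a b : Fin 3} {S : LDCSolution (Fin 3)}

theorem splus_adj_iff : (Splus x).adj a b ↔ a ≠ b := by
  fin_cases a <;> fin_cases b <;> simp [Splus, mkNet, switchSpec]

theorem splus_sus (hab : a ≠ b) : (Splus x).sus a b = 1 := by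
  fin_cases a <;> fin_cases b <;> simp [Splus, mkNet, switchSpec] at hab ⊢

theorem splus_cap :
    (Splus x).cap a b = !![0, 2 * x, x; 2 * x, 0, x; x, x, 0] a b := by
  fin_cases a <;> fin_cases b <;> simp [Splus, mkNet, switchSpec]

theorem splus_flow (hab : a ≠ b) :
    S.flow (Splus x) a b = if S.switched a b then 0 else S.theta a - S.theta b := by
  simp [flow, splus_adj_iff, splus_sus hab, hab, ite_not]

theorem splus_flow_load_eq_neg_cap (hx : 0 ≤ x) (hS : S.IsFeasible (Splus x)) (b : Fin 3) :
    S.flow (Splus x) 1 b = -(Splus x).cap 1 b := by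
  have gen_load : S.gen 1 = 0 := hS.gen_eq_zero (by simp [Splus, mkNet])
  have le_dem_load : 3 * x ≤ S.dem 1 := by simpa [Splus, mkNet] using hS.pmin_le_dem 1
  refine hS.flow_eq_neg_cap_of_sum_cap_le (fun b ↦ ?_) ?_ b
  · fin_cases b <;> simp [splus_cap, hx]
  · have sum_cap_load : ∑ b, (Splus x).cap 1 b = 2 * x + x := by
      simp [Fin.sum_univ_three, splus_cap]
    linarith

theorem splus_connector_gen_eq_add_flow (hx : 0 ≤ x) (hS : S.IsFeasible (Splus x)) :
    S.gen 2 = x + S.flow (Splus x) 2 0 := by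
  have dem_connector : S.dem 2 = 0 := hS.dem_eq_zero (by simp [Splus, mkNet])
  have flow_connector_load : S.flow (Splus x) 2 1 = x := by
    rw [hS.flow_swap (a := 1) (by simp [splus_adj_iff]) (by simp [splus_sus]),
      splus_flow_load_eq_neg_cap hx hS, neg_neg]
    simp [splus_cap]
  have kirchhoff := hS.sum_flow 2
  rw [Fin.sum_univ_three, flow_self, flow_connector_load, dem_connector] at kirchhoff
  linarith

theorem splus_theta_connector_sub_theta_generator (hx : 0 < x) (hS : S.IsFeasible (Splus x)) :
    S.theta 2 - S.theta 0 = -x := by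
  have theta_load_sub (b : Fin 3) (hb : 1 ≠ b) (hcap : 0 < (Splus x).cap 1 b) :
      S.theta 1 - S.theta b = -(Splus x).cap 1 b := by
    have saturated := splus_flow_load_eq_neg_cap hx.le hS b
    have active := flow_eq_sus_mul_of_ne_zero (saturated ▸ neg_ne_zero.mpr hcap.ne')
    rw [← saturated, active, splus_sus hb, one_mul]
  have load_generator : S.theta 1 - S.theta 0 = -(2 * x) := by
    simpa [splus_cap, hx] using theta_load_sub 0
  have load_connector : S.theta 1 - S.theta 2 = -x := by
    simpa [splus_cap, hx] using theta_load_sub 2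
  linarith

theorem splus_connector_gen_eq_zero_or_eq (hx : 0 < x) (hS : S.IsFeasible (Splus x)) :
    S.gen 2 = 0 ∨ S.gen 2 = x := by
  rw [splus_connector_gen_eq_add_flow hx.le hS, splus_flow (by decide),
    splus_theta_connector_sub_theta_generator hx hS]
  split_ifs <;> simp

/-- The candidate solution of `S⁺(x,v)` in which `v` generates `y`, the lines in `off` are switched
off, and the phase angles are those that saturate both lines at the load `l`. -/
def saturatingSolution (x y : ℝ) (off : Fin 3 → Fin 3 → Prop) : LDCSolution (Fin 3) where
  switched := off
  theta := ![2 * x, 0, x]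
  gen := ![3 * x - y, 0, y]
  dem := ![0, 3 * x, 0]

theorem saturatingSolution_isFeasible {off : Fin 3 → Fin 3 → Prop} (hy : 0 ≤ y) (hyx : y ≤ 3 * x)
    (hirrefl : ∀ a b, off a b → a ≠ b) (hsymm : ∀ a b, off a b → off b a)
    (kirchhoff : ∀ v, ∑ b, (saturatingSolution x y off).flow (Splus x) v b =
      (saturatingSolution x y off).gen v - (saturatingSolution x y off).dem v) :
    (saturatingSolution x y off).IsFeasible (Splus x) := by
  have hx : 0 ≤ x := by linarith
  refine ⟨fun a b hab ↦ splus_adj_iff.mpr (hirrefl a b hab), hsymm, ?capacity, ?demand,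
    ?generation, kirchhoff⟩
  case capacity =>
    intro a b hab _
    rw [splus_sus (splus_adj_iff.mp hab), one_mul, splus_cap, abs_le]
    constructor <;> fin_cases a <;> fin_cases b <;> simp [saturatingSolution] <;> linarith
  case demand =>
    intro v
    fin_cases v <;> simp [saturatingSolution, Splus, mkNet, hx]
  case generation =>
    have generator_le : ENNReal.ofReal (3 * x - y) ≤ ENNReal.ofReal (3 * x) :=
      ENNReal.ofReal_le_ofReal (by linarith)
    intro v
    fin_cases v
    · simpa [saturatingSolution, Splus, mkNet, hyx] using generator_le
    · simp [saturatingSolution]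
    · simp [saturatingSolution, Splus, mkNet, hy]

theorem exists_isFeasible_splus_connector_gen_eq_zero (hx : 0 ≤ x) :
    ∃ S : LDCSolution (Fin 3), S.IsFeasible (Splus x) ∧ S.gen 2 = 0 := by
  refine ⟨saturatingSolution x 0 fun _ _ ↦ False,
    saturatingSolution_isFeasible le_rfl (by linarith) (by simp) (by simp) fun v ↦ ?_, rfl⟩
  fin_cases v <;>
    simp [Fin.sum_univ_three, flow_self, splus_flow, saturatingSolution] <;> ring

theorem exists_isFeasible_splus_connector_gen_eq (hx : 0 ≤ x) :
    ∃ S : LDCSolution (Fin 3), S.IsFeasible (Splus x) ∧ S.gen 2 = x := by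
  refine ⟨saturatingSolution x x fun a b ↦ s(a, b) = s(0, 2),
    saturatingSolution_isFeasible hx (by linarith) (by decide) (by decide) fun v ↦ ?_, rfl⟩
  fin_cases v <;>
    simp [Fin.sum_univ_three, flow_self, splus_flow, saturatingSolution] <;> ring

end SwitchNetwork

/-- In the switch network `S⁺(x,v)` the set of possible generation
values of the connector `v` over all feasible switching solutions is exactly `{0, x}`. -/
theorem splus_gen_values (x : ℝ) (hx : 0 < x) :
    {y : ℝ | ∃ S : LDCSolution (Fin 3), S.IsFeasible (Splus x) ∧ y = S.gen 2} =
      {0, x} := by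
  ext y
  constructor
  · rintro ⟨S, hS, rfl⟩
    exact splus_connector_gen_eq_zero_or_eq hx hS
  · rintro (rfl | rfl)
    · obtain ⟨S, hS, gen_eq⟩ := exists_isFeasible_splus_connector_gen_eq_zero hx.le
      exact ⟨S, hS, gen_eq.symm⟩
    · obtain ⟨S, hS, gen_eq⟩ := exists_isFeasible_splus_connector_gen_eq hx.le
      exact ⟨S, hS, gen_eq.symm⟩
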